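/- Let E/F be a finite field extension, let O_{v_1}, …, O_{v_k} be finitely many valuation rings of F, and let R_1, …, R_k be subrings of E such that E is the field of fractions of each R_i and R_i ∩ F = O_{v_i} for each i. Set B = ⋂_{i=1}^k O_{v_i} and R = ⋂_{i=1}^k R_i, and let S = B \ {0}. Then E = S⁻¹R; that is, every x ∈ E can be written as x = r/b with r ∈ R and b ∈ B, b ≠ 0. -/

import Mathlib

/-!
Each `x : E` has a denominator in `F` for each `R i` separately: if `x = r / s` with `r, s ∈ R i`,
then `s` is algebraic over `O i`, so it divides a nonzero element of `O i` within `R i`. A common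
denominator in `B = ⋂ O i` exists because `F` is the field of fractions of `B`.

For the latter, given `a : F`, one needs `e ≠ 0` such that `v e ≥ max 1 (v a)` for each of the
finitely many valuations `v`; then `a = (a / e) / e⁻¹`. Take for `e` a monic integral polynomial in
`a`. If `v a > 1`, every such polynomial of positive degree will do. If `v a ≤ 1`, its value must be
a unit at `v`; among pairwise coprime polynomials at most one fails for a given `v`, so an infinite
family of them contains one that fails for no `v`.
-/

open Function
open scoped nonZeroDivisors

theorem exists_forall_isUnit_of_pairwise_isCoprime {ι κ : Type*} [Finite ι] [Infinite κ]
    {S : ι → Type*} [∀ i, CommSemiring (S i)] [∀ i, IsLocalRing (S i)] (x : ∀ i, κ → S i)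
    (hx : ∀ i, Pairwise (IsCoprime on x i)) : ∃ k, ∀ i, IsUnit (x i k) := by
  by_contra! h
  choose f hf using h
  obtain ⟨k, l, hkl, hfkl⟩ := Finite.exists_ne_map_eq_of_infinite f
  obtain ⟨u, w, huw⟩ := hx (f k) hkl
  rcases IsLocalRing.isUnit_or_isUnit_of_add_one huw with hk | hl
  · exact hf k (isUnit_of_mul_isUnit_right hk)
  · exact (hfkl ▸ hf l) (isUnit_of_mul_isUnit_right hl)

/-- Sylvester's sequence `2, 3, 7, 43, …`, started at `1 + a` instead of `2`. Its terms are monic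
integral polynomials in `a`, pairwise coprime because each is `1` plus a multiple of all the
preceding ones. -/
def sylvesterSeq {R : Type*} [CommRing R] (a : R) : ℕ → R
  | 0 => 1 + a
  | n + 1 => 1 + sylvesterSeq a n * (sylvesterSeq a n - 1)

section SylvesterSeq

variable {R : Type*} [CommRing R]

theorem map_sylvesterSeq {S : Type*} [CommRing S] (f : R →+* S) (a : R) (n : ℕ) :
    f (sylvesterSeq a n) = sylvesterSeq (f a) n := by
  induction n with
  | zero => simp only [sylvesterSeq, map_add, map_one]
  | succ n ih => simp only [sylvesterSeq, map_add, map_mul, map_sub, map_one, ih]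

theorem sylvesterSeq_dvd_sub_one (a : R) {m n : ℕ} (hmn : m < n) :
    sylvesterSeq a m ∣ sylvesterSeq a n - 1 := by
  induction n, hmn using Nat.le_induction with
  | base => exact ⟨sylvesterSeq a m - 1, add_sub_cancel_left _ _⟩
  | succ n _ ih =>
    rw [sylvesterSeq, add_sub_cancel_left]
    exact ih.mul_left _

theorem pairwise_isCoprime_sylvesterSeq (a : R) : Pairwise (IsCoprime on sylvesterSeq a) := by
  refine (Std.Symm.pairwise_on _).mpr fun m n hmn => ?_
  obtain ⟨c, hc⟩ := sylvesterSeq_dvd_sub_one a hmn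
  rw [sub_eq_iff_eq_add'.mp hc]
  exact isCoprime_one_right.add_mul_left_right c

theorem valuation_le_valuation_sylvesterSeq {Γ : Type*} [LinearOrderedCommGroupWithZero Γ]
    (v : Valuation R Γ) {a : R} (ha : 1 < v a) (n : ℕ) : v a ≤ v (sylvesterSeq a n) := by
  have map_one_add {y : R} (hy : 1 < v y) : v (1 + y) = v y :=
    v.map_add_eq_of_lt_right (v.map_one.trans_lt hy)
  induction n with
  | zero => exact (map_one_add ha).ge
  | succ n ih =>
    have hn : 1 < v (sylvesterSeq a n) := ha.trans_le ih
    have hsq : v (sylvesterSeq a n * (sylvesterSeq a n - 1)) =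
        v (sylvesterSeq a n) * v (sylvesterSeq a n) := by
      rw [map_mul, v.map_sub_eq_of_lt_left (v.map_one.trans_lt hn)]
    rw [sylvesterSeq, map_one_add (hsq ▸ one_lt_mul'' hn hn), hsq]
    exact ih.trans (le_mul_of_one_le_right' hn.le)

end SylvesterSeq

section ValuationSubring

variable {F ι : Type*} [Field F]

theorem max_one_valuation_le_valuation_sylvesterSeq (A : ValuationSubring F) {a : F} {n : ℕ}
    (hn : ∀ ha : a ∈ A, IsUnit (sylvesterSeq (⟨a, ha⟩ : A) n)) :
    max 1 (A.valuation a) ≤ A.valuation (sylvesterSeq a n) := by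
  by_cases ha : a ∈ A
  · have hcoe : ((sylvesterSeq ⟨a, ha⟩ n : A) : F) = sylvesterSeq a n :=
      map_sylvesterSeq A.subtype ⟨a, ha⟩ n
    rw [← hcoe, (A.valuation_eq_one_iff _).mp (hn ha)]
    exact max_le le_rfl ((A.valuation_le_one_iff a).mpr ha)
  · have hlt : 1 < A.valuation a := by rwa [← not_le, A.valuation_le_one_iff]
    rw [max_eq_right hlt.le]
    exact valuation_le_valuation_sylvesterSeq _ hlt n

theorem exists_ne_zero_forall_max_one_valuation_le [Finite ι] (A : ι → ValuationSubring F)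
    (a : F) : ∃ e : F, e ≠ 0 ∧ ∀ i, max 1 ((A i).valuation a) ≤ (A i).valuation e := by
  rcases isEmpty_or_nonempty ι with _ | ⟨⟨i₀⟩⟩
  · exact ⟨1, one_ne_zero, isEmptyElim⟩
  obtain ⟨n, hn⟩ := exists_forall_isUnit_of_pairwise_isCoprime
    (fun i : {i // a ∈ A i} => sylvesterSeq (⟨a, i.2⟩ : A i))
    fun _ => pairwise_isCoprime_sylvesterSeq _
  have hmax (i : ι) := max_one_valuation_le_valuation_sylvesterSeq (A i) fun ha => hn ⟨i, ha⟩
  exact ⟨sylvesterSeq a n, ((A i₀).valuation.pos_iff).mp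
    (zero_lt_one.trans_le ((le_max_left _ _).trans (hmax i₀))), hmax⟩

theorem isFractionRing_iInf_toSubring [Finite ι] (A : ι → ValuationSubring F) :
    IsFractionRing (⨅ i, (A i).toSubring : Subring F) F := by
  refine .of_field _ _ fun a => ?_
  obtain ⟨e, he0, he⟩ := exists_ne_zero_forall_max_one_valuation_le A a
  have hnum (i : ι) : a / e ∈ A i := by
    rw [← (A i).valuation_le_one_iff, map_div₀, div_le_one₀ ((Valuation.pos_iff _).mpr he0)]
    exact (le_max_right _ _).trans (he i)
  have hden (i : ι) : e⁻¹ ∈ A i := by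
    rw [← (A i).valuation_le_one_iff, map_inv₀]
    exact inv_le_one_of_one_le₀ ((le_max_left _ _).trans (he i))
  refine ⟨⟨a / e, Subring.mem_iInf.mpr hnum⟩, ⟨e⁻¹, Subring.mem_iInf.mpr hden⟩, ?_⟩
  change a = a / e / e⁻¹
  rw [div_inv_eq_mul, div_mul_cancel₀ a he0]

end ValuationSubring

theorem exists_ne_zero_smul_mem_of_isFractionRing {O E : Type*} [CommRing O] [CommRing E]
    [NoZeroDivisors E] [Algebra O E] [FaithfulSMul O E] [Algebra.IsAlgebraic O E]
    (R : Subalgebra O E) [IsFractionRing R E] (x : E) : ∃ c : O, c ≠ 0 ∧ c • x ∈ R := by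
  have : Nontrivial O := Algebra.IsAlgebraic.nontrivial O E
  have : FaithfulSMul O R := .tower_bot O R E
  have : Algebra.IsAlgebraic O R := .of_injective R.val Subtype.val_injective
  obtain ⟨⟨_, c, hc, rfl⟩, y, hy⟩ := IsLocalization.exists_integer_multiple
    (Algebra.algebraMapSubmonoid R O⁰) x
  rw [algebraMap_smul] at hy
  exact ⟨c, nonZeroDivisors.ne_zero hc, hy ▸ y.2⟩

theorem exists_ne_zero_forall_algebraMap_mul_mem {F E ι : Type*} [Field F] [CommRing E]
    [Algebra F E] [Finite ι] {O : ι → Subring F} {R : ι → Subring E}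
    [IsFractionRing (⨅ i, O i : Subring F) F]
    (hOR : ∀ i, ∀ a ∈ O i, algebraMap F E a ∈ R i) {x : E}
    (hx : ∀ i, ∃ c : F, c ≠ 0 ∧ algebraMap F E c * x ∈ R i) :
    ∃ b : F, b ≠ 0 ∧ ∀ i, b ∈ O i ∧ algebraMap F E b * x ∈ R i := by
  choose c hc0 hcR using hx
  obtain ⟨b, hb⟩ := IsLocalization.exist_integer_multiples_of_finite
    (⨅ i, O i : Subring F)⁰ fun i => (c i)⁻¹
  refine ⟨b, Subtype.coe_ne_coe.mpr (nonZeroDivisors.coe_ne_zero b),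
    fun i => ⟨Subring.mem_iInf.mp b.1.2 i, ?_⟩⟩
  obtain ⟨y, hy⟩ := hb i
  have hyc : (y : F) * c i = b := (eq_mul_inv_iff_mul_eq₀ (hc0 i)).mp hy
  rw [← hyc, map_mul, mul_assoc]
  exact (R i).mul_mem (hOR i y (Subring.mem_iInf.mp y.2 i)) (hcR i)

theorem field_eq_localization_of_intersection_general {F E ι : Type*} [Field F] [Field E]
    [Algebra F E] [Algebra.IsAlgebraic F E] [Finite ι] {O : ι → Subring F} {R : ι → Subring E}
    (hO : ∀ i, ∀ a : F, a ≠ 0 → a ∈ O i ∨ a⁻¹ ∈ O i)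
    (hfrac : ∀ i, ∀ x : E, ∃ r s : E, r ∈ R i ∧ s ∈ R i ∧ s ≠ 0 ∧ x = r / s)
    (hOR : ∀ i, ∀ a ∈ O i, algebraMap F E a ∈ R i) (x : E) :
    ∃ r : E, ∃ b : F, (∀ i, r ∈ R i) ∧ (∀ i, b ∈ O i) ∧ b ≠ 0 ∧ x = r / algebraMap F E b := by
  let A (i : ι) : ValuationSubring F := .ofSubring (O i) fun a =>
    (eq_or_ne a 0).elim (fun ha => .inl (ha ▸ (O i).zero_mem)) (hO i a)
  have : IsFractionRing (⨅ i, O i : Subring F) F := isFractionRing_iInf_toSubring A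
  have hx (i : ι) : ∃ c : F, c ≠ 0 ∧ algebraMap F E c * x ∈ R i := by
    let S : Subalgebra (A i) E := { R i with algebraMap_mem' := fun a => hOR i a a.2 }
    have : IsFractionRing S E := .of_field _ _ fun z =>
      let ⟨r, s, hr, hs, _, hz⟩ := hfrac i z
      ⟨⟨r, hr⟩, ⟨s, hs⟩, hz⟩
    have : Algebra.IsAlgebraic (A i) E :=
      (IsFractionRing.comap_isAlgebraic_iff (K := F)).mpr inferInstance
    obtain ⟨c, hc0, hc⟩ := exists_ne_zero_smul_mem_of_isFractionRing S x
    exact ⟨c, Subtype.coe_ne_coe.mpr hc0, by rwa [Algebra.smul_def] at hc⟩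
  obtain ⟨b, hb0, hb⟩ := exists_ne_zero_forall_algebraMap_mul_mem hOR hx
  have hb0' : algebraMap F E b ≠ 0 := (map_ne_zero _).mpr hb0
  exact ⟨algebraMap F E b * x, b, fun i => (hb i).2, fun i => (hb i).1, hb0,
    (mul_div_cancel_left₀ x hb0').symm⟩

/-- Proposition 3.4: E = S⁻¹R where R = ⋂ Rᵢ, B = ⋂ O_{vᵢ} and S = B \ {0}. -/
theorem field_eq_localization_of_intersection
    {F E : Type*} [Field F] [Field E] [Algebra F E] [FiniteDimensional F E]
    (k : ℕ) (O : Fin k → Subring F)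
    (hO : ∀ i : Fin k, ∀ a : F, a ≠ 0 → a ∈ O i ∨ a⁻¹ ∈ O i)
    (R : Fin k → Subring E)
    (hfrac : ∀ i : Fin k, ∀ x : E, ∃ r s : E, r ∈ R i ∧ s ∈ R i ∧ s ≠ 0 ∧ x = r / s)
    (hRF : ∀ i : Fin k, ∀ a : F, algebraMap F E a ∈ R i ↔ a ∈ O i) :
    ∀ x : E, ∃ r : E, ∃ b : F, (∀ i : Fin k, r ∈ R i) ∧ (∀ i : Fin k, b ∈ O i) ∧
      b ≠ 0 ∧ x = r / algebraMap F E b :=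
  field_eq_localization_of_intersection_general hO hfrac fun i a => (hRF i a).mpr
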